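/- arXiv:1901.02737 — 2 statements merged into one kernel-verified Lean document; each statement's English description precedes it below -/
import Mathlib

section
/- Let a ∈ 𝔻, f₀ ∈ 𝒮^∞, let c₀, c₁, λ ∈ ℂ with |c₀| = |c₁| = |λ| = 1, let b ∈ 𝔻, and set ρ(z) = λ·(z − b)/(conj(b)·z − 1) for z ∈ 𝔻. Then the map T defined by T(f)(z) = f₀(z) + c₀·f(a) + ∫_{[a,z]} c₁·f'(ρ(ζ)) dζ maps 𝒮^∞ into 𝒮^∞ and is a surjective isometry of 𝒮^∞ with respect to the norm ‖·‖_σ. -/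
open Complex Metric Set

/-- `f` belongs to `𝒮^∞`: `f` is analytic on the open unit disc `𝔻` and its
derivative is bounded on `𝔻`. -/
def MemSInf (f : ℂ → ℂ) : Prop :=
  DifferentiableOn ℂ f (ball (0 : ℂ) 1) ∧
    ∃ M : ℝ, ∀ z ∈ ball (0 : ℂ) 1, ‖deriv f z‖ ≤ M

/-- The norm `‖f‖_σ = |f(a)| + sup_{w ∈ 𝔻} |f'(w)|`. -/
noncomputable def normSigmaA (a : ℂ) (f : ℂ → ℂ) : ℝ :=
  ‖f a‖ + ⨆ w : ball (0 : ℂ) 1, ‖deriv f (w : ℂ)‖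

/-- The line integral `∫_{[a,z]} g(ζ) dζ = ∫₀¹ g(a + t(z − a))·(z − a) dt`
along the straight segment from `a` to `z`. -/
noncomputable def lineInt (g : ℂ → ℂ) (a z : ℂ) : ℂ :=
  ∫ t in (0:ℝ)..1, g (a + (t : ℂ) * (z - a)) * (z - a)

/-- Fundamental theorem of calculus along a segment in the disc. -/
theorem lineInt_eq_sub {k F : ℂ → ℂ} (hk : ContinuousOn k (ball (0 : ℂ) 1))
    (hF : ∀ z ∈ ball (0 : ℂ) 1, HasDerivAt F (k z) z) {a z : ℂ}
    (ha : a ∈ ball (0 : ℂ) 1) (hz : z ∈ ball (0 : ℂ) 1) :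
    lineInt k a z = F z - F a := by
  have hmem : ∀ t ∈ uIcc (0:ℝ) 1, a + (t : ℂ) * (z - a) ∈ ball (0 : ℂ) 1 := by
    intro t ht
    rw [uIcc_of_le zero_le_one] at ht
    have := (convex_ball (0 : ℂ) 1).add_smul_sub_mem ha hz ht
    simpa using this
  have hpath : ∀ t : ℝ, HasDerivAt (fun t : ℝ => a + (t : ℂ) * (z - a)) (z - a) t := by
    intro t
    have h1 : HasDerivAt (fun t : ℝ => (t : ℂ)) 1 t := Complex.ofRealCLM.hasDerivAt
    simpa using (h1.mul_const (z - a)).const_add a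
  have h := intervalIntegral.integral_eq_sub_of_hasDerivAt
    (f := fun t : ℝ => F (a + (t : ℂ) * (z - a)))
    (f' := fun t : ℝ => k (a + (t : ℂ) * (z - a)) * (z - a)) (a := 0) (b := 1)
    (fun t ht => (hF _ (hmem t ht)).comp t (hpath t)) ?_
  · simpa [lineInt] using h
  · apply ContinuousOn.intervalIntegrable
    refine ContinuousOn.mul (hk.comp ?_ hmem) continuousOn_const
    fun_prop

theorem hasDerivAt_lineInt {k : ℂ → ℂ} (hk : DifferentiableOn ℂ k (ball (0 : ℂ) 1))
    {a z : ℂ} (ha : a ∈ ball (0 : ℂ) 1) (hz : z ∈ ball (0 : ℂ) 1) :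
    HasDerivAt (lineInt k a) (k z) z := by
  obtain ⟨F, hF⟩ := hk.isExactOn_ball
  refine ((hF z hz).sub_const (F a)).congr_of_eventuallyEq ?_
  filter_upwards [isOpen_ball.mem_nhds hz] with w hw
  exact lineInt_eq_sub hk.continuousOn hF ha hw

theorem lineInt_self (k : ℂ → ℂ) (a : ℂ) : lineInt k a a = 0 := by
  simp [lineInt]

theorem mobius_den_ne {b z : ℂ} (hb : b ∈ ball (0 : ℂ) 1) (hz : z ∈ ball (0 : ℂ) 1) :
    (starRingEnd ℂ) b * z - 1 ≠ 0 := by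
  rw [mem_ball_zero_iff] at hb hz
  intro h
  have h1 : ‖(starRingEnd ℂ) b * z‖ = 1 := by rw [sub_eq_zero.mp h]; simp
  rw [norm_mul, RCLike.norm_conj] at h1
  nlinarith [norm_nonneg b, norm_nonneg z]

theorem mobius_mem {b z : ℂ} (hb : b ∈ ball (0 : ℂ) 1) (hz : z ∈ ball (0 : ℂ) 1) :
    (z - b) / ((starRingEnd ℂ) b * z - 1) ∈ ball (0 : ℂ) 1 := by
  have hd := mobius_den_ne hb hz
  rw [mem_ball_zero_iff] at hb hz ⊢
  rw [norm_div, div_lt_one (norm_pos_iff.mpr hd)]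
  have hb2 : normSq b < 1 := by rw [normSq_eq_norm_sq]; nlinarith [norm_nonneg b]
  have hz2 : normSq z < 1 := by rw [normSq_eq_norm_sq]; nlinarith [norm_nonneg z]
  have key : normSq (z - b) < normSq ((starRingEnd ℂ) b * z - 1) := by
    have := mul_pos (sub_pos.mpr hb2) (sub_pos.mpr hz2)
    simp only [normSq_apply, sub_re, sub_im, mul_re, mul_im, conj_re, conj_im, one_re,
      one_im] at this ⊢
    nlinarith
  rw [normSq_eq_norm_sq, normSq_eq_norm_sq] at key
  exact lt_of_pow_lt_pow_left₀ 2 (norm_nonneg _) key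

theorem mobius_invol {b u : ℂ} (hb : b ∈ ball (0 : ℂ) 1) (hu : u ∈ ball (0 : ℂ) 1) :
    ((u - b) / ((starRingEnd ℂ) b * u - 1) - b) /
      ((starRingEnd ℂ) b * ((u - b) / ((starRingEnd ℂ) b * u - 1)) - 1) = u := by
  have hd := mobius_den_ne hb hu
  have hd2 := mobius_den_ne hb (mobius_mem hb hu)
  have hq := div_mul_cancel₀ (u - b) hd
  rw [div_eq_iff hd2]
  linear_combination -hq

theorem integral_form_is_surjective_isometry_normSigmaA
    (a : ℂ) (ha : a ∈ ball (0 : ℂ) 1)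
    (f₀ : ℂ → ℂ) (hf₀ : MemSInf f₀)
    (c₀ c₁ lam : ℂ) (hc₀ : ‖c₀‖ = 1) (hc₁ : ‖c₁‖ = 1) (hlam : ‖lam‖ = 1)
    (b : ℂ) (hb : b ∈ ball (0 : ℂ) 1)
    (ρ : ℂ → ℂ) (hρ : ∀ z, ρ z = lam * (z - b) / ((starRingEnd ℂ) b * z - 1))
    (T : (ℂ → ℂ) → (ℂ → ℂ))
    (hT : ∀ f z, T f z = f₀ z + c₀ * f a + lineInt (fun ζ => c₁ * deriv f (ρ ζ)) a z) :
    (∀ f, MemSInf f → MemSInf (T f)) ∧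
    (∀ g, MemSInf g → ∃ f, MemSInf f ∧ Set.EqOn (T f) g (ball (0 : ℂ) 1)) ∧
    (∀ f g, MemSInf f → MemSInf g →
      normSigmaA a (T f - T g) = normSigmaA a (f - g)) := by
  -- the disc automorphism
  have hlam0 : lam ≠ 0 := by intro h; simp [h] at hlam
  have hc₀0 : c₀ ≠ 0 := by intro h; simp [h] at hc₀
  have hc₁0 : c₁ ≠ 0 := by intro h; simp [h] at hc₁
  have hmul : ∀ z ∈ ball (0 : ℂ) 1, lam * z ∈ ball (0 : ℂ) 1 := by
    intro z hz; rw [mem_ball_zero_iff] at hz ⊢; rwa [norm_mul, hlam, one_mul]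
  have hdiv : ∀ z ∈ ball (0 : ℂ) 1, z / lam ∈ ball (0 : ℂ) 1 := by
    intro z hz; rw [mem_ball_zero_iff] at hz ⊢; rwa [norm_div, hlam, div_one]
  have hρmem : MapsTo ρ (ball (0 : ℂ) 1) (ball (0 : ℂ) 1) := by
    intro z hz
    rw [hρ, mul_div_assoc]
    exact hmul _ (mobius_mem hb hz)
  have hρdiff : DifferentiableOn ℂ ρ (ball (0 : ℂ) 1) := by
    have : ρ = fun z => lam * (z - b) / ((starRingEnd ℂ) b * z - 1) := funext hρ
    rw [this]
    exact DifferentiableOn.div (by fun_prop) (by fun_prop) (fun z hz => mobius_den_ne hb hz)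
  let σ : ℂ → ℂ := fun w => (w / lam - b) / ((starRingEnd ℂ) b * (w / lam) - 1)
  have hσmem : MapsTo σ (ball (0 : ℂ) 1) (ball (0 : ℂ) 1) :=
    fun w hw => mobius_mem hb (hdiv w hw)
  have hσdiff : DifferentiableOn ℂ σ (ball (0 : ℂ) 1) :=
    DifferentiableOn.div (by fun_prop) (by fun_prop)
      (fun w hw => mobius_den_ne hb (hdiv w hw))
  have hρσ : ∀ w ∈ ball (0 : ℂ) 1, ρ (σ w) = w := by
    intro w hw
    rw [hρ, mul_div_assoc]
    simp only [σ]
    rw [mobius_invol hb (hdiv w hw), mul_div_cancel₀ _ hlam0]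
  have hσρ : ∀ z ∈ ball (0 : ℂ) 1, σ (ρ z) = z := by
    intro z hz
    have : ρ z / lam = (z - b) / ((starRingEnd ℂ) b * z - 1) := by
      rw [hρ, mul_div_assoc, mul_div_cancel_left₀ _ hlam0]
    simp only [σ]
    rw [this, mobius_invol hb hz]
  -- derivatives
  have hdd : ∀ {f : ℂ → ℂ}, MemSInf f → DifferentiableOn ℂ (deriv f) (ball (0 : ℂ) 1) :=
    fun hf => hf.1.deriv isOpen_ball
  have hda : ∀ {f : ℂ → ℂ}, MemSInf f → ∀ z ∈ ball (0 : ℂ) 1, HasDerivAt f (deriv f z) z :=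
    fun hf z hz => (hf.1.differentiableAt (isOpen_ball.mem_nhds hz)).hasDerivAt
  have hTd : ∀ f, MemSInf f → ∀ z ∈ ball (0 : ℂ) 1,
      HasDerivAt (T f) (deriv f₀ z + c₁ * deriv f (ρ z)) z := by
    intro f hf z hz
    have hk : DifferentiableOn ℂ (fun ζ => c₁ * deriv f (ρ ζ)) (ball (0 : ℂ) 1) :=
      ((hdd hf).comp hρdiff hρmem).const_mul c₁
    have : T f = fun z => f₀ z + c₀ * f a + lineInt (fun ζ => c₁ * deriv f (ρ ζ)) a z :=
      funext (hT f)
    rw [this]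
    exact ((hda hf₀ z hz).add_const _).add (hasDerivAt_lineInt hk ha hz)
  refine ⟨?_, ?_, ?_⟩
  · intro f hf
    refine ⟨fun z hz => (hTd f hf z hz).differentiableAt.differentiableWithinAt, ?_⟩
    obtain ⟨M₀, h₀⟩ := hf₀.2
    obtain ⟨M, h⟩ := hf.2
    refine ⟨M₀ + M, fun z hz => ?_⟩
    rw [(hTd f hf z hz).deriv]
    refine (norm_add_le _ _).trans (add_le_add (h₀ z hz) ?_)
    rw [norm_mul, hc₁, one_mul]
    exact h _ (hρmem hz)
  · intro g hg
    let k : ℂ → ℂ := fun w => c₁⁻¹ * (deriv g (σ w) - deriv f₀ (σ w))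
    have hk : DifferentiableOn ℂ k (ball (0 : ℂ) 1) :=
      (((hdd hg).comp hσdiff hσmem).sub ((hdd hf₀).comp hσdiff hσmem)).const_mul _
    let f : ℂ → ℂ := fun w => c₀⁻¹ * (g a - f₀ a) + lineInt k a w
    have hfd : ∀ w ∈ ball (0 : ℂ) 1, HasDerivAt f (k w) w :=
      fun w hw => (hasDerivAt_lineInt hk ha hw).const_add _
    have hf : MemSInf f := by
      refine ⟨fun z hz => (hfd z hz).differentiableAt.differentiableWithinAt, ?_⟩
      obtain ⟨M₀, h₀⟩ := hf₀.2
      obtain ⟨M, h⟩ := hg.2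
      refine ⟨M + M₀, fun z hz => ?_⟩
      rw [(hfd z hz).deriv]
      simp only [k]
      rw [norm_mul, norm_inv, hc₁, inv_one, one_mul]
      exact (norm_sub_le _ _).trans (add_le_add (h _ (hσmem hz)) (h₀ _ (hσmem hz)))
    refine ⟨f, hf, fun z hz => ?_⟩
    have hk2 : DifferentiableOn ℂ (fun ζ => c₁ * deriv f (ρ ζ)) (ball (0 : ℂ) 1) :=
      ((hdd hf).comp hρdiff hρmem).const_mul c₁
    have hfa : f a = c₀⁻¹ * (g a - f₀ a) := by simp [f, lineInt_self]
    rw [hT, lineInt_eq_sub (F := fun z => g z - f₀ z) hk2.continuousOn ?_ ha hz, hfa,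
      mul_inv_cancel_left₀ hc₀0]
    · ring
    · intro w hw
      rw [(hfd _ (hρmem hw)).deriv]
      simp only [k]
      rw [hσρ w hw, mul_inv_cancel_left₀ hc₁0]
      exact (hda hg w hw).sub (hda hf₀ w hw)
  · intro f g hf hg
    unfold normSigmaA
    congr 1
    · simp only [Pi.sub_apply, hT, lineInt_self]
      rw [← one_mul ‖f a - g a‖, ← hc₀, ← norm_mul]
      congr 1
      ring
    · refine Function.Surjective.iSup_congr (fun w => ⟨ρ w, hρmem w.2⟩) ?_ ?_
      · intro w
        exact ⟨⟨σ w, hσmem w.2⟩, Subtype.ext (hρσ w w.2)⟩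
      · intro w
        rw [((hTd f hf w w.2).sub (hTd g hg w w.2)).deriv,
          ((hda hf _ (hρmem w.2)).sub (hda hg _ (hρmem w.2))).deriv,
          add_sub_add_left_eq_sub, ← mul_sub, norm_mul, hc₁, one_mul]
end

section
/- Let X be a compact Hausdorff topological space and let B be a complex linear subspace of the space C(X, ℂ) of continuous complex-valued functions on X (with the supremum norm) such that B contains the constant function 1 and B separates the points of X. For x ∈ X let δ_x ∈ B* be the evaluation functional δ_x(f) = f(x), and equip the dual space B* with the weak* topology. Then the map h : 𝕋 × X → B* defined by h(λ, x) = λ·δ_x is injective, and h is a homeomorphism of 𝕋 × X (with the product topology) onto its image 𝓑 = {λ·δ_x : λ ∈ 𝕋, x ∈ X} with the relative weak* topology. -/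
open ContinuousMap

theorem circle_smul_eval_embedding
    {X : Type*} [TopologicalSpace X] [CompactSpace X] [T2Space X]
    (B : Submodule ℂ C(X, ℂ))
    (hone : (1 : C(X, ℂ)) ∈ B)
    (hsep : ∀ x y : X, x ≠ y → ∃ f ∈ B, (f : C(X, ℂ)) x ≠ f y)
    (δ : X → WeakDual ℂ B)
    (hδ : ∀ (x : X) (f : B), δ x f = (f : C(X, ℂ)) x)
    (h : Circle × X → WeakDual ℂ B)
    (hh : ∀ (lam : Circle) (x : X), h (lam, x) = (lam : ℂ) • δ x) :
    Function.Injective h ∧ Topology.IsEmbedding h := by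
  have key : ∀ (p : Circle × X) (f : B), h p f = (p.1 : ℂ) * (f : C(X, ℂ)) p.2 := by
    rintro ⟨l, x⟩ f
    rw [hh, ← hδ x f]
    rfl
  have hinj : Function.Injective h := by
    rintro ⟨l, x⟩ ⟨m, y⟩ hxy
    have e : ∀ f : B, (l : ℂ) * (f : C(X, ℂ)) x = (m : ℂ) * (f : C(X, ℂ)) y := by
      intro f
      have h1 := key (l, x) f
      have h2 := key (m, y) f
      rw [hxy] at h1
      exact h1.symm.trans h2
    have hlm : (l : ℂ) = m := by simpa using e ⟨1, hone⟩
    have hlm' : l = m := Circle.ext hlm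
    subst hlm'
    have hx : x = y := by
      by_contra hne
      obtain ⟨f, hf, hfne⟩ := hsep x y hne
      exact hfne (mul_left_cancel₀ (Circle.coe_ne_zero l) (e ⟨f, hf⟩))
    rw [hx]
  have hcont : Continuous h := by
    refine WeakDual.continuous_of_continuous_eval fun f => ?_
    simp only [key]
    fun_prop
  exact ⟨hinj, (hcont.isClosedEmbedding hinj).isEmbedding⟩
end
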